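/- arXiv:1208.3510 — 5 statements merged into one kernel-verified Lean document; each statement's English description precedes it below -/
import Mathlib

section
/- Let F : [a,b] × [0,T) → ℝ² be a smooth planar curve shortening flow with nonvanishing speed. Then the total length 𝓛(t) = ∫_a^b ‖∂_u F(u,t)‖ du is differentiable in t and satisfies d𝓛/dt = -∫_a^b κ(u,t)² ‖∂_u F(u,t)‖ du. -/
open Real MeasureTheory Set Filter

noncomputable section

/-- The Euclidean plane. -/
abbrev E2 : Type := EuclideanSpace ℝ (Fin 2)

/-- Rotation of a vector by +π/2. -/
def rot (w : E2) : E2 := !₂[-(w 1), w 0]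

namespace CSF

variable (F : ℝ → ℝ → E2)

/-- The partial derivative ∂ᵤF. -/
def pu (u t : ℝ) : E2 := deriv (fun x => F x t) u

/-- The partial derivative ∂ₜF. -/
def pt (u t : ℝ) : E2 := deriv (fun x => F u x) t

/-- The speed v = ‖∂ᵤF‖. -/
def speed (u t : ℝ) : ℝ := ‖pu F u t‖

/-- The arclength derivative ∂ₛ f = v⁻¹ ∂ᵤ f of a quantity along the flow. -/
def sderiv {X : Type*} [NormedAddCommGroup X] [NormedSpace ℝ X]
    (f : ℝ → ℝ → X) (u t : ℝ) : X :=
  (speed F u t)⁻¹ • deriv (fun x => f x t) u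

/-- The unit tangent T = ∂ₛ F. -/
def tang (u t : ℝ) : E2 := (speed F u t)⁻¹ • pu F u t

/-- The unit normal N, the tangent rotated by +π/2. -/
def nor (u t : ℝ) : E2 := rot (tang F u t)

/-- The curvature κ = ⟨∂ₛT, N⟩. -/
def curv (u t : ℝ) : ℝ := inner (𝕜 := ℝ) (sderiv F (tang F) u t) (nor F u t)

/-- `F` is a smooth planar curve shortening flow with nonvanishing speed on `[a,b] × [0,T)`:
it is smooth, `∂ᵤF ≠ 0` on the domain, and `∂ₜF = κN` on the domain. -/
def IsCSF (a b T : ℝ) : Prop :=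
  ContDiff ℝ (⊤ : ℕ∞) (fun p : ℝ × ℝ => F p.1 p.2) ∧
  (∀ u ∈ Icc a b, ∀ t ∈ Ico 0 T, pu F u t ≠ 0) ∧
  (∀ u ∈ Icc a b, ∀ t ∈ Ico 0 T, pt F u t = curv F u t • nor F u t)

end CSF

/-!
Equality of mixed partials gives `∂ₜ‖∂ᵤF‖ = ⟪T, ∂ᵤ∂ₜF⟫`. When the curve moves normally, `∂ₜF = φN`,
differentiating `⟪∂ₜF, T⟫ = 0` along the curve turns this into `-⟪φN, ∂ᵤT⟫ = -φκv`: only the normal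
component of the motion, paired with the curvature, changes the length. Curve shortening is the case
`φ = κ`.
-/

open Function
open scoped InnerProductSpace Topology

section PartialDerivatives

variable {𝕜 E : Type*} [NontriviallyNormedField 𝕜] [NormedAddCommGroup E] [NormedSpace 𝕜 E]
  {f : 𝕜 → 𝕜 → E} {u t : 𝕜}

lemma hasDerivAt_fst_of_differentiableAt (hf : DifferentiableAt 𝕜 (uncurry f) (u, t)) :
    HasDerivAt (fun x => f x t) (fderiv 𝕜 (uncurry f) (u, t) (1, 0)) u :=
  HasFDerivAt.comp_hasDerivAt u (l := uncurry f) hf.hasFDerivAt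
    ((hasDerivAt_id u).prodMk (hasDerivAt_const u t))

lemma hasDerivAt_snd_of_differentiableAt (hf : DifferentiableAt 𝕜 (uncurry f) (u, t)) :
    HasDerivAt (f u) (fderiv 𝕜 (uncurry f) (u, t) (0, 1)) t :=
  HasFDerivAt.comp_hasDerivAt t (l := uncurry f) hf.hasFDerivAt
    ((hasDerivAt_const t u).prodMk (hasDerivAt_id t))

lemma contDiff_uncurry_deriv_fst {n : WithTop ℕ∞} (hf : ContDiff 𝕜 (n + 1) (uncurry f)) :
    ContDiff 𝕜 n (uncurry fun u t => deriv (fun x => f x t) u) := by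
  have hpartial : (uncurry fun u t => deriv (fun x => f x t) u) =
      fun p => fderiv 𝕜 (uncurry f) p (1, 0) := funext fun p =>
    (hasDerivAt_fst_of_differentiableAt (hf.differentiable (by simp) p)).deriv
  exact hpartial ▸ (hf.fderiv_right le_rfl).clm_apply contDiff_const

lemma contDiff_uncurry_deriv_snd {n : WithTop ℕ∞} (hf : ContDiff 𝕜 (n + 1) (uncurry f)) :
    ContDiff 𝕜 n (uncurry fun u t => deriv (f u) t) := by
  have hpartial : (uncurry fun u t => deriv (f u) t) =
      fun p => fderiv 𝕜 (uncurry f) p (0, 1) := funext fun p =>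
    (hasDerivAt_snd_of_differentiableAt (hf.differentiable (by simp) p)).deriv
  exact hpartial ▸ (hf.fderiv_right le_rfl).clm_apply contDiff_const

lemma deriv_deriv_comm {𝕜 : Type*} [RCLike 𝕜] [NormedSpace 𝕜 E] {f : 𝕜 → 𝕜 → E}
    (hf : ContDiff 𝕜 2 (uncurry f)) (u t : 𝕜) :
    deriv (fun y => deriv (fun x => f x y) u) t = deriv (fun x => deriv (f x) t) u := by
  have hdiff : Differentiable 𝕜 (uncurry f) := hf.differentiable (by simp)
  have hdiff' : Differentiable 𝕜 (fderiv 𝕜 (uncurry f)) :=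
    (hf.fderiv_right (m := 1) (by norm_num)).differentiable (by simp)
  have hsymm : IsSymmSndFDerivAt 𝕜 (uncurry f) (u, t) :=
    hf.contDiffAt.isSymmSndFDerivAt (by simp)
  calc deriv (fun y => deriv (fun x => f x y) u) t
      = deriv (fun y => fderiv 𝕜 (uncurry f) (u, y) (1, 0)) t := by
        simp only [(hasDerivAt_fst_of_differentiableAt (hdiff _)).deriv]
    _ = fderiv 𝕜 (fderiv 𝕜 (uncurry f)) (u, t) (0, 1) (1, 0) := by
        simpa using ((hasDerivAt_snd_of_differentiableAt
          (f := curry (fderiv 𝕜 (uncurry f))) (hdiff' (u, t))).clm_apply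
            (hasDerivAt_const t ((1 : 𝕜), (0 : 𝕜)))).deriv
    _ = fderiv 𝕜 (fderiv 𝕜 (uncurry f)) (u, t) (1, 0) (0, 1) := hsymm _ _
    _ = deriv (fun x => fderiv 𝕜 (uncurry f) (x, t) (0, 1)) u := by
        simpa using ((hasDerivAt_fst_of_differentiableAt
          (f := curry (fderiv 𝕜 (uncurry f))) (hdiff' (u, t))).clm_apply
            (hasDerivAt_const u ((0 : 𝕜), (1 : 𝕜)))).deriv.symm
    _ = deriv (fun x => deriv (f x) t) u := by
        simp only [(hasDerivAt_snd_of_differentiableAt (hdiff _)).deriv]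

end PartialDerivatives

lemma hasDerivAt_norm_of_ne_zero {E : Type*} [NormedAddCommGroup E] [InnerProductSpace ℝ E]
    {f : ℝ → E} {f' : E} {x : ℝ} (hf : HasDerivAt f f' x) (hx : f x ≠ 0) :
    HasDerivAt (fun y => ‖f y‖) ⟪‖f x‖⁻¹ • f x, f'⟫_ℝ x := by
  have hsqrt := hf.norm_sq.sqrt (by positivity)
  simp only [Real.sqrt_sq (norm_nonneg _)] at hsqrt
  convert hsqrt using 1
  rw [real_inner_smul_left]
  field_simp

lemma hasDerivAt_intervalIntegral_of_locallyLipschitz {E : Type*} [NormedAddCommGroup E]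
    [NormedSpace ℝ E] {μ : Measure ℝ} [IsLocallyFiniteMeasure μ] {f : ℝ → ℝ → E} {f' : ℝ → E}
    {a b t : ℝ} (hf : LocallyLipschitz (uncurry f))
    (hf'_meas : AEStronglyMeasurable f' (μ.restrict (uIoc a b)))
    (hderiv : ∀ᵐ u ∂μ, u ∈ uIoc a b → HasDerivAt (f u) (f' u) t) :
    HasDerivAt (fun x => ∫ u in a..b, f u x ∂μ) (∫ u in a..b, f' u ∂μ) t := by
  obtain ⟨C, hC⟩ := hf.locallyLipschitzOn.exists_lipschitzOnWith_of_compact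
    (isCompact_uIcc.prod (isCompact_closedBall t 1) : IsCompact (uIcc a b ×ˢ Metric.closedBall t 1))
  have hcont (x : ℝ) : Continuous fun u => f u x :=
    hf.continuous.comp (by fun_prop : Continuous fun u : ℝ => (u, x))
  have hlip (u : ℝ) (hu : u ∈ uIoc a b) : LipschitzOnWith C (f u) (Metric.closedBall t 1) := by
    intro x hx y hy
    simpa [Prod.edist_eq] using
      hC (mk_mem_prod (uIoc_subset_uIcc hu) hx) (mk_mem_prod (uIoc_subset_uIcc hu) hy)
  refine (intervalIntegral.hasDerivAt_integral_of_dominated_loc_of_lip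
    (Metric.closedBall_mem_nhds t one_pos)
    (Eventually.of_forall fun x => (hcont x).aestronglyMeasurable)
    ((hcont t).intervalIntegrable a b) hf'_meas (bound := fun _ => C) ?_
    intervalIntegrable_const hderiv).2
  exact Eventually.of_forall fun u hu => by simpa using hlip u hu

lemma inner_self_rot (w : E2) : ⟪w, rot w⟫_ℝ = 0 := by
  simp [rot, PiLp.inner_apply, Fin.sum_univ_two, mul_comm]

namespace CSF

variable {F : ℝ → ℝ → E2} {a b u t : ℝ}

lemma contDiff_pu (hF : ContDiff ℝ 2 (uncurry F)) : ContDiff ℝ 1 (uncurry (pu F)) :=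
  contDiff_uncurry_deriv_fst (by simpa [one_add_one_eq_two] using hF)

lemma contDiff_pt (hF : ContDiff ℝ 2 (uncurry F)) : ContDiff ℝ 1 (uncurry (pt F)) :=
  contDiff_uncurry_deriv_snd (by simpa [one_add_one_eq_two] using hF)

lemma hasDerivAt_speed (hF : ContDiff ℝ 2 (uncurry F)) (hne : pu F u t ≠ 0) :
    HasDerivAt (speed F u) ⟪tang F u t, deriv (fun x => pt F x t) u⟫_ℝ t := by
  have hpu : HasDerivAt (pu F u) (deriv (fun x => pt F x t) u) t :=
    (hasDerivAt_snd_of_differentiableAt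
      ((contDiff_pu hF).differentiable one_ne_zero (u, t))).differentiableAt.hasDerivAt.congr_deriv
        (deriv_deriv_comm hF u t)
  exact hasDerivAt_norm_of_ne_zero hpu hne

lemma differentiableAt_tang (hF : ContDiff ℝ 2 (uncurry F)) (hne : pu F u t ≠ 0) :
    DifferentiableAt ℝ (fun x => tang F x t) u := by
  have hpu : DifferentiableAt ℝ (fun x => pu F x t) u :=
    (hasDerivAt_fst_of_differentiableAt
      ((contDiff_pu hF).differentiable one_ne_zero (u, t))).differentiableAt
  exact ((hpu.norm ℝ hne).inv (norm_ne_zero_iff.mpr hne)).smul hpu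

lemma hasDerivAt_integral_speed (hF : ContDiff ℝ 2 (uncurry F))
    (hne : ∀ u ∈ uIcc a b, pu F u t ≠ 0) :
    HasDerivAt (fun x => ∫ u in a..b, speed F u x)
      (∫ u in a..b, ⟪tang F u t, deriv (fun x => pt F x t) u⟫_ℝ) t := by
  -- The norm is Lipschitz even at zero: this replaces a lower bound on the speed at nearby times.
  have hlip : LocallyLipschitz (uncurry (speed F)) :=
    lipschitzWith_one_norm.locallyLipschitz.comp (contDiff_pu hF).locallyLipschitz
  have hpt' : Continuous fun u => deriv (fun x => pt F x t) u :=
    (contDiff_uncurry_deriv_fst (n := 0) (by simpa using contDiff_pt hF)).continuous.comp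
      (by fun_prop : Continuous fun u : ℝ => (u, t))
  have hcont : ContinuousOn (fun u => ⟪tang F u t, deriv (fun x => pt F x t) u⟫_ℝ) (uIcc a b) :=
    fun u hu => ((differentiableAt_tang hF (hne u hu)).continuousAt.inner
      hpt'.continuousAt).continuousWithinAt
  exact hasDerivAt_intervalIntegral_of_locallyLipschitz hlip
    ((hcont.mono uIoc_subset_uIcc).aestronglyMeasurable measurableSet_uIoc)
    (Eventually.of_forall fun u hu => hasDerivAt_speed hF (hne u (uIoc_subset_uIcc hu)))

lemma curv_mul_speed (hne : pu F u t ≠ 0) :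
    curv F u t * speed F u t = ⟪deriv (fun x => tang F x t) u, nor F u t⟫_ℝ := by
  have hspeed : speed F u t ≠ 0 := norm_ne_zero_iff.mpr hne
  rw [curv, sderiv, real_inner_smul_left]
  field_simp

lemma inner_tang_deriv_of_normal (hF : ContDiff ℝ 2 (uncurry F)) (hne : pu F u t ≠ 0)
    {V : ℝ → E2} {φ : ℝ → ℝ} (hV : DifferentiableAt ℝ V u)
    (hnormal : ∀ᶠ x in 𝓝 u, V x = φ x • nor F x t) :
    ⟪tang F u t, deriv V u⟫_ℝ = -(φ u * curv F u t * speed F u t) := by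
  have horth : (fun x => ⟪tang F x t, V x⟫_ℝ) =ᶠ[𝓝 u] fun _ => 0 :=
    hnormal.mono fun x hx => by
      simp only [hx, real_inner_smul_right, nor, inner_self_rot, mul_zero]
  have hleibniz : ⟪tang F u t, deriv V u⟫_ℝ + ⟪deriv (fun x => tang F x t) u, V u⟫_ℝ = 0 := by
    rw [← deriv_inner_apply ℝ (differentiableAt_tang hF hne) hV, horth.deriv_eq, deriv_const]
  rw [eq_neg_of_add_eq_zero_left hleibniz, hnormal.self_of_nhds, real_inner_smul_right,
    ← curv_mul_speed hne, mul_assoc]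

end CSF

theorem length_evolution_general {a b t : ℝ} {F : ℝ → ℝ → E2} {φ : ℝ → ℝ}
    (hF : ContDiff ℝ 2 (uncurry F)) (hne : ∀ u ∈ uIcc a b, CSF.pu F u t ≠ 0)
    (hnormal : ∀ u ∈ uIcc a b, CSF.pt F u t = φ u • CSF.nor F u t) :
    HasDerivAt (fun x => ∫ u in a..b, CSF.speed F u x)
      (-∫ u in a..b, φ u * CSF.curv F u t * CSF.speed F u t) t := by
  refine (CSF.hasDerivAt_integral_speed hF hne).congr_deriv ?_
  rw [← intervalIntegral.integral_neg]
  refine intervalIntegral.integral_congr_uIoo fun u hu => ?_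
  have hpt : DifferentiableAt ℝ (fun x => CSF.pt F x t) u :=
    (hasDerivAt_fst_of_differentiableAt
      ((CSF.contDiff_pt hF).differentiable one_ne_zero (u, t))).differentiableAt
  exact CSF.inner_tang_deriv_of_normal hF (hne u (uIoo_subset_uIcc_self hu)) hpt
    (eventually_of_mem (isOpen_Ioo.mem_nhds hu) fun x hx => hnormal x (uIoo_subset_uIcc_self hx))

/-- the total length 𝓛(t) = ∫ₐᵇ ‖∂ᵤF‖ du is differentiable in t with
d𝓛/dt = -∫ₐᵇ κ² ‖∂ᵤF‖ du. -/
theorem length_evolution (a b T : ℝ) (hab : a < b) (hT : 0 < T)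
    (F : ℝ → ℝ → E2) (hF : CSF.IsCSF F a b T) :
    ∀ t ∈ Ico 0 T,
      HasDerivAt (fun x => ∫ u in a..b, CSF.speed F u x)
        (-∫ u in a..b, (CSF.curv F u t) ^ 2 * CSF.speed F u t) t := by
  intro t ht
  obtain ⟨hsmooth, hne, hflow⟩ := hF
  simpa only [sq] using length_evolution_general (contDiff_infty.mp hsmooth 2)
    (uIcc_of_le hab.le ▸ (hne · · t ht)) (uIcc_of_le hab.le ▸ (hflow · · t ht))
end
end

section
/- Let F : [a,b] × [0,T) → ℝ² be a smooth planar curve shortening flow with nonvanishing speed, satisfying κ(a,t) = κ(b,t) = 0 for all t. Then d/dt ∫_a^b (∂_s κ)² v du = ∫_a^b ( 7κ²(∂_s κ)² - 2(∂_s² κ)² ) v du for every t ∈ (0,T). -/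
open Real MeasureTheory Set Filter

noncomputable section

/-!
Differentiating `∂ₜF = κN` in arclength gives `∂ₜv = -κ²v`, hence `∂ₜ∂ₛ = ∂ₛ∂ₜ + κ²∂ₛ`. Applied to
`F`, to `T` and to `κ`, this commutator rule yields in turn `∂ₜT = (∂ₛκ)N`, `∂ₜκ = ∂ₛ²κ + κ³` and
`∂ₜ∂ₛκ = ∂ₛ³κ + 4κ²∂ₛκ`. Therefore
`∂ₜ((∂ₛκ)²v) = (7κ²(∂ₛκ)² - 2(∂ₛ²κ)²)v + ∂ᵤ(2 ∂ₛκ ∂ₛ²κ)`,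
and the boundary term vanishes because `κ = 0` at an endpoint for all times forces
`∂ₛ²κ = ∂ₜκ - κ³ = 0` there.

The flow equation is only known on `[a,b] × [0,T)`, but `F` is smooth beyond it, and the derivatives
of a smooth function at an endpoint of an interval are determined by its values on the interval.
So the evolution equations hold up to the boundary, without any limiting argument.
-/

open scoped ContDiff Topology InnerProductSpace

namespace CSF

section PartialDerivatives

variable {X Y : Type*} [NormedAddCommGroup X] [NormedSpace ℝ X]
  [NormedAddCommGroup Y] [NormedSpace ℝ Y] {f g : ℝ → ℝ → X} {u t : ℝ}

/-- The partial derivative `∂ᵤf` of a quantity along the flow; `pu` is the case `f = F`. -/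
def uderiv (f : ℝ → ℝ → X) (u t : ℝ) : X := deriv (fun x => f x t) u

/-- The partial derivative `∂ₜf` of a quantity along the flow; `pt` is the case `f = F`. -/
def tderiv (f : ℝ → ℝ → X) (u t : ℝ) : X := deriv (fun x => f u x) t

/-- Joint smoothness of a quantity along the flow near the point `(u, t)`. -/
abbrev SmoothAt (f : ℝ → ℝ → X) (u t : ℝ) : Prop := ContDiffAt ℝ ∞ (Function.uncurry f) (u, t)

theorem hasDerivAt_fst (h : DifferentiableAt ℝ (Function.uncurry f) (u, t)) :
    HasDerivAt (fun x => f x t) (fderiv ℝ (Function.uncurry f) (u, t) (1, 0)) u :=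
  HasFDerivAt.comp_hasDerivAt (f := fun x => (x, t)) u h.hasFDerivAt
    ((hasDerivAt_id u).prodMk (hasDerivAt_const u t))

theorem hasDerivAt_snd (h : DifferentiableAt ℝ (Function.uncurry f) (u, t)) :
    HasDerivAt (fun x => f u x) (fderiv ℝ (Function.uncurry f) (u, t) (0, 1)) t :=
  HasFDerivAt.comp_hasDerivAt (f := fun x => (u, x)) t h.hasFDerivAt
    ((hasDerivAt_const t u).prodMk (hasDerivAt_id t))

theorem eventually_differentiableAt {Z : Type*} [NormedAddCommGroup Z] [NormedSpace ℝ Z]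
    {φ : Z → X} {z : Z} (h : ContDiffAt ℝ 1 φ z) : ∀ᶠ y in 𝓝 z, DifferentiableAt ℝ φ y :=
  (h.eventually (by simp)).mono fun _ hy => hy.differentiableAt one_ne_zero

theorem uderiv_eventuallyEq_fderiv (h : ContDiffAt ℝ 1 (Function.uncurry f) (u, t)) :
    Function.uncurry (uderiv f) =ᶠ[𝓝 (u, t)] fun p => fderiv ℝ (Function.uncurry f) p (1, 0) :=
  (eventually_differentiableAt h).mono fun _ hp => (hasDerivAt_fst hp).deriv

theorem tderiv_eventuallyEq_fderiv (h : ContDiffAt ℝ 1 (Function.uncurry f) (u, t)) :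
    Function.uncurry (tderiv f) =ᶠ[𝓝 (u, t)] fun p => fderiv ℝ (Function.uncurry f) p (0, 1) :=
  (eventually_differentiableAt h).mono fun _ hp => (hasDerivAt_snd hp).deriv

theorem contDiffAt_uderiv {n : ℕ∞ω} (h : ContDiffAt ℝ (n + 1) (Function.uncurry f) (u, t)) :
    ContDiffAt ℝ n (Function.uncurry (uderiv f)) (u, t) :=
  ((h.fderiv_right le_rfl).clm_apply contDiffAt_const).congr_of_eventuallyEq
    (uderiv_eventuallyEq_fderiv (h.of_le le_add_self))

theorem contDiffAt_tderiv {n : ℕ∞ω} (h : ContDiffAt ℝ (n + 1) (Function.uncurry f) (u, t)) :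
    ContDiffAt ℝ n (Function.uncurry (tderiv f)) (u, t) :=
  ((h.fderiv_right le_rfl).clm_apply contDiffAt_const).congr_of_eventuallyEq
    (tderiv_eventuallyEq_fderiv (h.of_le le_add_self))

theorem tderiv_uderiv_comm (h : ContDiffAt ℝ 2 (Function.uncurry f) (u, t)) :
    tderiv (uderiv f) u t = uderiv (tderiv f) u t := by
  have h₂ : ContDiffAt ℝ (1 + 1) (Function.uncurry f) (u, t) := by rwa [one_add_one_eq_two]
  have h₁ : ContDiffAt ℝ 1 (Function.uncurry f) (u, t) := h.of_le one_le_two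
  have hd : DifferentiableAt ℝ (fderiv ℝ (Function.uncurry f)) (u, t) :=
    (h₂.fderiv_right le_rfl).differentiableAt one_ne_zero
  have htu : tderiv (uderiv f) u t =
      fderiv ℝ (fderiv ℝ (Function.uncurry f)) (u, t) (0, 1) (1, 0) := by
    refine (hasDerivAt_snd ((contDiffAt_uderiv h₂).differentiableAt one_ne_zero)).deriv.trans ?_
    rw [(uderiv_eventuallyEq_fderiv h₁).fderiv_eq, fderiv_clm_apply hd (by fun_prop)]
    simp
  have hut : uderiv (tderiv f) u t =
      fderiv ℝ (fderiv ℝ (Function.uncurry f)) (u, t) (1, 0) (0, 1) := by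
    refine (hasDerivAt_fst ((contDiffAt_tderiv h₂).differentiableAt one_ne_zero)).deriv.trans ?_
    rw [(tderiv_eventuallyEq_fderiv h₁).fderiv_eq, fderiv_clm_apply hd (by fun_prop)]
    simp
  rw [htu, hut, h.isSymmSndFDerivAt (by simp)]

theorem SmoothAt.differentiableAt (h : SmoothAt f u t) :
    DifferentiableAt ℝ (Function.uncurry f) (u, t) :=
  ContDiffAt.differentiableAt h (by simp)

theorem SmoothAt.hasDerivAt_uderiv (h : SmoothAt f u t) :
    HasDerivAt (fun x => f x t) (uderiv f u t) u :=
  (hasDerivAt_fst h.differentiableAt).differentiableAt.hasDerivAt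

theorem SmoothAt.hasDerivAt_tderiv (h : SmoothAt f u t) :
    HasDerivAt (fun x => f u x) (tderiv f u t) t :=
  (hasDerivAt_snd h.differentiableAt).differentiableAt.hasDerivAt

theorem SmoothAt.uderiv (h : SmoothAt f u t) : SmoothAt (uderiv f) u t :=
  contDiffAt_uderiv (n := ∞) h

theorem SmoothAt.tderiv (h : SmoothAt f u t) : SmoothAt (tderiv f) u t :=
  contDiffAt_tderiv (n := ∞) h

theorem SmoothAt.tderiv_uderiv (h : SmoothAt f u t) :
    CSF.tderiv (CSF.uderiv f) u t = CSF.uderiv (CSF.tderiv f) u t :=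
  tderiv_uderiv_comm (ContDiffAt.of_le h (WithTop.coe_le_coe.2 (le_top : (2 : ℕ∞) ≤ ⊤)))

theorem SmoothAt.smul {φ : ℝ → ℝ → ℝ} (hφ : SmoothAt φ u t) (hf : SmoothAt f u t) :
    SmoothAt (fun u t => φ u t • f u t) u t :=
  ContDiffAt.smul hφ hf

theorem SmoothAt.clm (L : X →L[ℝ] Y) (h : SmoothAt f u t) : SmoothAt (fun u t => L (f u t)) u t :=
  ContDiffAt.continuousLinearMap_comp L h

theorem continuousOn_of_smoothAt {s : Set ℝ} (h : ∀ x ∈ s, SmoothAt f x t) :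
    ContinuousOn (fun x => f x t) s :=
  fun x hx => (h x hx).hasDerivAt_uderiv.continuousAt.continuousWithinAt

theorem deriv_eq_of_eqOn {φ ψ : ℝ → X} {s : Set ℝ} {x : ℝ} (hs : UniqueDiffWithinAt ℝ s x)
    (hx : x ∈ s) (h : EqOn φ ψ s) (hφ : DifferentiableAt ℝ φ x) (hψ : DifferentiableAt ℝ ψ x) :
    deriv φ x = deriv ψ x := by
  rw [← hφ.derivWithin hs, ← hψ.derivWithin hs, derivWithin_congr h (h hx)]

theorem hasDerivAt_intervalIntegral {a b : ℝ}
    (h : ∀ x ∈ uIcc a b, ContDiffAt ℝ 1 (Function.uncurry f) (x, t)) :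
    HasDerivAt (fun y => ∫ x in a..b, f x y) (∫ x in a..b, tderiv f x t) t := by
  have hnhds : ∀ᶠ y in 𝓝 t, ∀ x ∈ uIcc a b, ContDiffAt ℝ 1 (Function.uncurry f) (x, y) := by
    refine isCompact_uIcc.eventually_forall_of_forall_eventually fun x hx => ?_
    exact continuous_swap.continuousAt.eventually ((h x hx).eventually (by simp))
  obtain ⟨ε, hε, hball⟩ := Metric.nhds_basis_closedBall.mem_iff.1 hnhds
  have hcont {y : ℝ} (hy : y ∈ Metric.closedBall t ε) :
      ContinuousOn (fun x => f x y) (uIcc a b) :=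
    fun x hx => (hasDerivAt_fst ((hball hy x hx).differentiableAt
      one_ne_zero)).continuousAt.continuousWithinAt
  have hcont' : ContinuousOn (Function.uncurry (tderiv f)) (uIcc a b ×ˢ Metric.closedBall t ε) :=
    fun p hp => (contDiffAt_tderiv (n := 0)
      (by simpa using hball hp.2 p.1 hp.1)).continuousAt.continuousWithinAt
  have hcont't : ContinuousOn (fun x => tderiv f x t) (uIcc a b) :=
    hcont'.comp (f := fun x => (x, t)) (by fun_prop) fun x hx =>
      ⟨hx, Metric.mem_closedBall_self hε.le⟩
  obtain ⟨C, hC⟩ :=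
    (isCompact_uIcc.prod (isCompact_closedBall t ε)).exists_bound_of_continuousOn hcont'
  refine (intervalIntegral.hasDerivAt_integral_of_dominated_loc_of_deriv_le
    (F := fun y x => f x y) (F' := fun y x => tderiv f x y) (bound := fun _ => C)
    (Metric.closedBall_mem_nhds t hε) ?_ ?_ ?_ ?_ intervalIntegrable_const ?_).2
  · filter_upwards [Metric.closedBall_mem_nhds t hε] with y hy
    exact ((hcont hy).mono uIoc_subset_uIcc).aestronglyMeasurable measurableSet_uIoc
  · exact (hcont (Metric.mem_closedBall_self hε.le)).intervalIntegrable
  · exact (hcont't.mono uIoc_subset_uIcc).aestronglyMeasurable measurableSet_uIoc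
  · exact ae_of_all _ fun x hx y hy => hC (x, y) ⟨uIoc_subset_uIcc hx, hy⟩
  · exact ae_of_all _ fun x hx y hy => (hasDerivAt_snd ((hball hy x
      (uIoc_subset_uIcc hx)).differentiableAt one_ne_zero)).differentiableAt.hasDerivAt

end PartialDerivatives

section Rotation

/-- The rotation `rot` as a linear isometry of the plane. -/
def rotₗᵢ : E2 →ₗᵢ[ℝ] E2 where
  toFun := rot
  map_add' x y := by ext i; fin_cases i <;> simp [rot, add_comm]
  map_smul' c x := by ext i; fin_cases i <;> simp [rot]
  norm_map' x := by simp [rot, EuclideanSpace.norm_eq, Fin.sum_univ_two, add_comm]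

theorem rot_rot (w : E2) : rot (rot w) = -w := by
  ext i; fin_cases i <;> simp [rot]

theorem inner_rot_self (w : E2) : ⟪rot w, w⟫_ℝ = 0 := by
  simp [rot, PiLp.inner_apply, Fin.sum_univ_two, mul_comm]

theorem eq_inner_smul_add_inner_rot_smul {e : E2} (he : ‖e‖ = 1) (w : E2) :
    w = ⟪w, e⟫_ℝ • e + ⟪w, rot e⟫_ℝ • rot e := by
  have hsq : e 0 ^ 2 + e 1 ^ 2 = 1 := by
    simpa [he, Fin.sum_univ_two] using (EuclideanSpace.norm_sq_eq e).symm
  have hinner : ⟪w, e⟫_ℝ = w 0 * e 0 + w 1 * e 1 := by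
    simp [PiLp.inner_apply, Fin.sum_univ_two, mul_comm]
  have hinner_rot : ⟪w, rot e⟫_ℝ = w 1 * e 0 - w 0 * e 1 := by
    simp [rot, PiLp.inner_apply, Fin.sum_univ_two, mul_comm, neg_add_eq_sub]
  rw [hinner, hinner_rot]
  ext i
  fin_cases i
  · change w 0 = (w 0 * e 0 + w 1 * e 1) * e 0 + (w 1 * e 0 - w 0 * e 1) * -e 1
    linear_combination -(w 0) * hsq
  · change w 1 = (w 0 * e 0 + w 1 * e 1) * e 1 + (w 1 * e 0 - w 0 * e 1) * e 0
    linear_combination -(w 1) * hsq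

end Rotation

theorem inner_eq_zero_of_norm_eventuallyEq_one {H : Type*} [NormedAddCommGroup H]
    [InnerProductSpace ℝ H] {φ : ℝ → H} {φ' : H} {x : ℝ} (hφ : HasDerivAt φ φ' x)
    (h : ∀ᶠ y in 𝓝 x, ‖φ y‖ = 1) : ⟪φ x, φ'⟫_ℝ = 0 := by
  have hconst : HasDerivAt (fun y => ‖φ y‖ ^ 2) 0 x :=
    (hasDerivAt_const x (1 : ℝ)).congr_of_eventuallyEq (h.mono fun y hy => by simp [hy])
  linarith [hφ.norm_sq.unique hconst]

variable {X : Type*} [NormedAddCommGroup X] [NormedSpace ℝ X]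
  {F : ℝ → ℝ → E2} {f g : ℝ → ℝ → X} {φ : ℝ → ℝ → ℝ} {a b T u t : ℝ}

section ArclengthDerivative

theorem tang_eq_sderiv : tang F = sderiv F F := rfl

theorem sderiv_smul (hφ : DifferentiableAt ℝ (fun x => φ x t) u)
    (hg : DifferentiableAt ℝ (fun x => g x t) u) :
    sderiv F (fun u t => φ u t • g u t) u t =
      sderiv F φ u t • g u t + φ u t • sderiv F g u t := by
  simp only [sderiv, deriv_fun_smul hφ hg, smul_eq_mul]
  module

end ArclengthDerivative

section OneSidedDerivatives

theorem sderiv_eq_of_eqOn_Icc (hab : a < b) (hu : u ∈ Icc a b) (h : ∀ x ∈ Icc a b, f x t = g x t)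
    (hf : SmoothAt f u t) (hg : SmoothAt g u t) : sderiv F f u t = sderiv F g u t :=
  congrArg ((speed F u t)⁻¹ • ·) <| deriv_eq_of_eqOn (uniqueDiffOn_Icc hab u hu) hu h
    hf.hasDerivAt_uderiv.differentiableAt hg.hasDerivAt_uderiv.differentiableAt

theorem tderiv_eq_of_eqOn_Ico (ht : t ∈ Ico 0 T) (h : ∀ y ∈ Ico 0 T, f u y = g u y)
    (hf : SmoothAt f u t) (hg : SmoothAt g u t) : tderiv f u t = tderiv g u t :=
  deriv_eq_of_eqOn (uniqueDiffOn_Ico 0 T t ht) ht h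
    hf.hasDerivAt_tderiv.differentiableAt hg.hasDerivAt_tderiv.differentiableAt

end OneSidedDerivatives

section RegularPoints

/-- `F` is smooth and immersed near `(u, t)`, so that all geometric quantities are smooth there. -/
structure RegularAt (F : ℝ → ℝ → E2) (u t : ℝ) : Prop where
  smoothAt : SmoothAt F u t
  pu_ne_zero : pu F u t ≠ 0

theorem norm_tang (h : pu F u t ≠ 0) : ‖tang F u t‖ = 1 := norm_smul_inv_norm h

theorem norm_nor (h : pu F u t ≠ 0) : ‖nor F u t‖ = 1 :=
  (rotₗᵢ.norm_map _).trans (norm_tang h)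

theorem inner_tang_nor : ⟪tang F u t, nor F u t⟫_ℝ = 0 :=
  (real_inner_comm _ _).trans (inner_rot_self _)

namespace RegularAt

theorem speed_ne_zero (h : RegularAt F u t) : speed F u t ≠ 0 := norm_ne_zero_iff.2 h.pu_ne_zero

theorem smoothAt_speed (h : RegularAt F u t) : SmoothAt (speed F) u t :=
  ContDiffAt.norm ℝ h.smoothAt.uderiv h.pu_ne_zero

theorem smoothAt_sderiv (h : RegularAt F u t) (hf : SmoothAt f u t) :
    SmoothAt (sderiv F f) u t :=
  (ContDiffAt.inv h.smoothAt_speed h.speed_ne_zero).smul hf.uderiv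

theorem smoothAt_tang (h : RegularAt F u t) : SmoothAt (tang F) u t :=
  h.smoothAt_sderiv h.smoothAt

theorem smoothAt_nor (h : RegularAt F u t) : SmoothAt (nor F) u t :=
  h.smoothAt_tang.clm rotₗᵢ.toContinuousLinearMap

theorem smoothAt_curv (h : RegularAt F u t) : SmoothAt (curv F) u t :=
  ContDiffAt.inner ℝ (h.smoothAt_sderiv h.smoothAt_tang) h.smoothAt_nor

theorem uderiv_eq (h : RegularAt F u t) (f : ℝ → ℝ → X) :
    uderiv f u t = speed F u t • sderiv F f u t :=
  (smul_inv_smul₀ h.speed_ne_zero _).symm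

theorem sderiv_tang (h : RegularAt F u t) :
    sderiv F (tang F) u t = curv F u t • nor F u t := by
  have hnorm : ∀ᶠ x in 𝓝 u, ‖tang F x t‖ = 1 :=
    (h.smoothAt.uderiv.hasDerivAt_uderiv.continuousAt.eventually_ne h.pu_ne_zero).mono
      fun _ hx => norm_tang hx
  have hinner : ⟪sderiv F (tang F) u t, tang F u t⟫_ℝ = 0 := by
    have := inner_eq_zero_of_norm_eventuallyEq_one h.smoothAt_tang.hasDerivAt_uderiv hnorm
    rw [sderiv, real_inner_smul_left, real_inner_comm]
    exact mul_eq_zero_of_right _ this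
  have := eq_inner_smul_add_inner_rot_smul (norm_tang h.pu_ne_zero) (sderiv F (tang F) u t)
  rwa [hinner, zero_smul, zero_add] at this

theorem sderiv_nor (h : RegularAt F u t) :
    sderiv F (nor F) u t = -curv F u t • tang F u t := by
  have hrot : uderiv (nor F) u t = rotₗᵢ (uderiv (tang F) u t) :=
    (rotₗᵢ.toContinuousLinearMap.hasFDerivAt.comp_hasDerivAt u
      h.smoothAt_tang.hasDerivAt_uderiv).deriv
  calc sderiv F (nor F) u t = rotₗᵢ (sderiv F (tang F) u t) := by
        rw [sderiv, sderiv, map_smul]; exact congrArg _ hrot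
    _ = curv F u t • rot (rot (tang F u t)) := by rw [h.sderiv_tang, map_smul]; rfl
    _ = -curv F u t • tang F u t := by rw [rot_rot, smul_neg, neg_smul]

theorem sderiv_smul_nor (h : RegularAt F u t) (hφ : SmoothAt φ u t) :
    sderiv F (fun u t => φ u t • nor F u t) u t =
      sderiv F φ u t • nor F u t - (φ u t * curv F u t) • tang F u t := by
  rw [sderiv_smul hφ.hasDerivAt_uderiv.differentiableAt
    h.smoothAt_nor.hasDerivAt_uderiv.differentiableAt, h.sderiv_nor]
  module

end RegularAt

end RegularPoints

section Evolution

namespace IsCSF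

theorem regularAt (hF : IsCSF F a b T) (hu : u ∈ Icc a b) (ht : t ∈ Ico 0 T) :
    RegularAt F u t :=
  ⟨hF.1.contDiffAt, hF.2.1 u hu t ht⟩

theorem sderiv_tderiv_self (hF : IsCSF F a b T) (hab : a < b) (hu : u ∈ Icc a b)
    (ht : t ∈ Ico 0 T) :
    sderiv F (tderiv F) u t =
      sderiv F (curv F) u t • nor F u t - curv F u t ^ 2 • tang F u t := by
  have h := hF.regularAt hu ht
  rw [sderiv_eq_of_eqOn_Icc hab hu (fun x hx => hF.2.2 x hx t ht) h.smoothAt.tderiv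
    (h.smoothAt_curv.smul h.smoothAt_nor), h.sderiv_smul_nor h.smoothAt_curv, pow_two]

theorem tderiv_speed (hF : IsCSF F a b T) (hab : a < b) (hu : u ∈ Icc a b) (ht : t ∈ Ico 0 T) :
    tderiv (speed F) u t = -curv F u t ^ 2 * speed F u t := by
  have h := hF.regularAt hu ht
  have hsq : 2 * speed F u t * tderiv (speed F) u t
      = 2 * ⟪uderiv F u t, tderiv (uderiv F) u t⟫_ℝ := by
    simpa using (h.smoothAt_speed.hasDerivAt_tderiv.fun_pow 2).unique
      h.smoothAt.uderiv.hasDerivAt_tderiv.norm_sq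
  have hinner : ⟪uderiv F u t, tderiv (uderiv F) u t⟫_ℝ
      = -curv F u t ^ 2 * speed F u t ^ 2 := by
    rw [h.smoothAt.tderiv_uderiv, h.uderiv_eq F, h.uderiv_eq (tderiv F),
      hF.sderiv_tderiv_self hab hu ht, ← tang_eq_sderiv]
    simp only [real_inner_smul_left, real_inner_smul_right, inner_sub_right,
      inner_tang_nor, real_inner_self_eq_norm_sq, norm_tang h.pu_ne_zero]
    ring
  apply mul_left_cancel₀ (mul_ne_zero two_ne_zero h.speed_ne_zero)
  linear_combination hsq + 2 * hinner

theorem tderiv_sderiv (hF : IsCSF F a b T) (hab : a < b) (hu : u ∈ Icc a b) (ht : t ∈ Ico 0 T)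
    (hf : SmoothAt f u t) :
    tderiv (sderiv F f) u t = sderiv F (tderiv f) u t + curv F u t ^ 2 • sderiv F f u t := by
  have h := hF.regularAt hu ht
  have hprod : tderiv (sderiv F f) u t = (speed F u t)⁻¹ • tderiv (uderiv f) u t
      + (-tderiv (speed F) u t / speed F u t ^ 2) • uderiv f u t :=
    ((h.smoothAt_speed.hasDerivAt_tderiv.fun_inv h.speed_ne_zero).smul
      hf.uderiv.hasDerivAt_tderiv).deriv
  have hcoef : -tderiv (speed F) u t / speed F u t ^ 2 = curv F u t ^ 2 * (speed F u t)⁻¹ := by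
    have := h.speed_ne_zero
    rw [hF.tderiv_speed hab hu ht]
    field_simp
  rw [hprod, hcoef, hf.tderiv_uderiv, mul_smul]
  rfl

theorem tderiv_tang (hF : IsCSF F a b T) (hab : a < b) (hu : u ∈ Icc a b) (ht : t ∈ Ico 0 T) :
    tderiv (tang F) u t = sderiv F (curv F) u t • nor F u t := by
  rw [tang_eq_sderiv, hF.tderiv_sderiv hab hu ht (hF.regularAt hu ht).smoothAt,
    hF.sderiv_tderiv_self hab hu ht, tang_eq_sderiv, sub_add_cancel]

theorem tderiv_sderiv_tang (hF : IsCSF F a b T) (hab : a < b) (hu : u ∈ Icc a b)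
    (ht : t ∈ Ico 0 T) :
    tderiv (sderiv F (tang F)) u t =
      (sderiv F (sderiv F (curv F)) u t + curv F u t ^ 3) • nor F u t
        - (sderiv F (curv F) u t * curv F u t) • tang F u t := by
  have h := hF.regularAt hu ht
  have hκs := h.smoothAt_sderiv h.smoothAt_curv
  rw [hF.tderiv_sderiv hab hu ht h.smoothAt_tang,
    sderiv_eq_of_eqOn_Icc hab hu (fun x hx => hF.tderiv_tang hab hx ht) h.smoothAt_tang.tderiv
      (hκs.smul h.smoothAt_nor),
    h.sderiv_smul_nor hκs, h.sderiv_tang]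
  module

theorem tderiv_curv (hF : IsCSF F a b T) (hab : a < b) (hu : u ∈ Icc a b) (ht : t ∈ Ico 0 T) :
    tderiv (curv F) u t = sderiv F (sderiv F (curv F)) u t + curv F u t ^ 3 := by
  have h := hF.regularAt hu ht
  have hnorm : ∀ᶠ y in 𝓝 t, ‖nor F u y‖ = 1 :=
    (h.smoothAt.uderiv.hasDerivAt_tderiv.continuousAt.eventually_ne h.pu_ne_zero).mono
      fun _ hy => norm_nor hy
  have hN : ⟪nor F u t, tderiv (nor F) u t⟫_ℝ = 0 :=
    inner_eq_zero_of_norm_eventuallyEq_one h.smoothAt_nor.hasDerivAt_tderiv hnorm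
  have hprod : tderiv (curv F) u t = ⟪sderiv F (tang F) u t, tderiv (nor F) u t⟫_ℝ
      + ⟪tderiv (sderiv F (tang F)) u t, nor F u t⟫_ℝ :=
    ((h.smoothAt_sderiv h.smoothAt_tang).hasDerivAt_tderiv.inner ℝ
      h.smoothAt_nor.hasDerivAt_tderiv).deriv
  rw [hprod, h.sderiv_tang, hF.tderiv_sderiv_tang hab hu ht]
  simp only [inner_sub_left, real_inner_smul_left, hN, inner_tang_nor,
    real_inner_self_eq_norm_sq, norm_nor h.pu_ne_zero]
  ring

theorem tderiv_sderiv_curv (hF : IsCSF F a b T) (hab : a < b) (hu : u ∈ Icc a b)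
    (ht : t ∈ Ico 0 T) :
    tderiv (sderiv F (curv F)) u t = sderiv F (sderiv F (sderiv F (curv F))) u t
      + 4 * curv F u t ^ 2 * sderiv F (curv F) u t := by
  have h := hF.regularAt hu ht
  have hκ := h.smoothAt_curv
  have hκss := h.smoothAt_sderiv (h.smoothAt_sderiv hκ)
  have hsmooth : SmoothAt (fun u t => sderiv F (sderiv F (curv F)) u t + curv F u t ^ 3) u t :=
    ContDiffAt.add hκss (ContDiffAt.pow hκ 3)
  have hrhs : sderiv F (fun u t => sderiv F (sderiv F (curv F)) u t + curv F u t ^ 3) u t =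
      sderiv F (sderiv F (sderiv F (curv F))) u t
        + 3 * curv F u t ^ 2 * sderiv F (curv F) u t := by
    rw [sderiv, (hκss.hasDerivAt_uderiv.fun_add (hκ.hasDerivAt_uderiv.fun_pow 3)).deriv]
    simp only [sderiv, uderiv, smul_eq_mul, Nat.cast_ofNat, Nat.add_one_sub_one]
    ring
  rw [hF.tderiv_sderiv hab hu ht hκ, sderiv_eq_of_eqOn_Icc hab hu
    (fun x hx => hF.tderiv_curv hab hx ht) hκ.tderiv hsmooth, hrhs, smul_eq_mul]
  ring

theorem tderiv_sderiv_curv_sq_mul_speed (hF : IsCSF F a b T) (hab : a < b) (hu : u ∈ Icc a b)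
    (ht : t ∈ Ico 0 T) :
    tderiv (fun u t => sderiv F (curv F) u t ^ 2 * speed F u t) u t =
      (7 * curv F u t ^ 2 * sderiv F (curv F) u t ^ 2
          - 2 * sderiv F (sderiv F (curv F)) u t ^ 2) * speed F u t
        + uderiv (fun u t => 2 * sderiv F (curv F) u t * sderiv F (sderiv F (curv F)) u t) u t := by
  have h := hF.regularAt hu ht
  have hκs := h.smoothAt_sderiv h.smoothAt_curv
  have hκss := h.smoothAt_sderiv hκs
  have hlhs := ((hκs.hasDerivAt_tderiv.fun_pow 2).fun_mul h.smoothAt_speed.hasDerivAt_tderiv).deriv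
  have hrhs := ((hκs.hasDerivAt_uderiv.const_mul 2).fun_mul hκss.hasDerivAt_uderiv).deriv
  rw [tderiv, hlhs, uderiv, hrhs, hF.tderiv_sderiv_curv hab hu ht, hF.tderiv_speed hab hu ht,
    h.uderiv_eq (sderiv F (curv F)), h.uderiv_eq (sderiv F (sderiv F (curv F)))]
  simp only [smul_eq_mul]
  ring

theorem sderiv_sderiv_curv_eq_zero (hF : IsCSF F a b T) (hab : a < b) (hu : u ∈ Icc a b)
    (ht : t ∈ Ico 0 T) (hκ : ∀ y ∈ Ico 0 T, curv F u y = 0) :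
    sderiv F (sderiv F (curv F)) u t = 0 := by
  have hκt : tderiv (curv F) u t = 0 := by
    rw [tderiv_eq_of_eqOn_Ico (g := fun _ _ => 0) ht hκ (hF.regularAt hu ht).smoothAt_curv
      contDiffAt_const, tderiv, deriv_const]
  simpa [hκt, hκ t ht] using (hF.tderiv_curv hab hu ht).symm

theorem hasDerivAt_integral_sderiv_curv_sq (hF : IsCSF F a b T) (hab : a < b) (ht : t ∈ Ico 0 T) :
    HasDerivAt (fun y => ∫ u in a..b, sderiv F (curv F) u y ^ 2 * speed F u y)
      ((∫ u in a..b, (7 * curv F u t ^ 2 * sderiv F (curv F) u t ^ 2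
          - 2 * sderiv F (sderiv F (curv F)) u t ^ 2) * speed F u t)
        + (2 * sderiv F (curv F) b t * sderiv F (sderiv F (curv F)) b t
          - 2 * sderiv F (curv F) a t * sderiv F (sderiv F (curv F)) a t)) t := by
  have hreg (x : ℝ) (hx : x ∈ uIcc a b) : RegularAt F x t :=
    hF.regularAt (uIcc_of_le hab.le ▸ hx) ht
  have hv (x : ℝ) (hx : x ∈ uIcc a b) := (hreg x hx).smoothAt_speed
  have hκ (x : ℝ) (hx : x ∈ uIcc a b) := (hreg x hx).smoothAt_curv
  have hκs (x : ℝ) (hx : x ∈ uIcc a b) := (hreg x hx).smoothAt_sderiv (hκ x hx)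
  have hκss (x : ℝ) (hx : x ∈ uIcc a b) := (hreg x hx).smoothAt_sderiv (hκs x hx)
  have hflux (x : ℝ) (hx : x ∈ uIcc a b) : SmoothAt
      (fun u t => 2 * sderiv F (curv F) u t * sderiv F (sderiv F (curv F)) u t) x t :=
    (contDiffAt_const.mul (hκs x hx)).mul (hκss x hx)
  have hflux_int := (continuousOn_of_smoothAt fun x hx => (hflux x hx).uderiv).intervalIntegrable
    (μ := volume)
  have hbulk_int : IntervalIntegrable (fun u => (7 * curv F u t ^ 2 * sderiv F (curv F) u t ^ 2
      - 2 * sderiv F (sderiv F (curv F)) u t ^ 2) * speed F u t) volume a b := by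
    have := continuousOn_of_smoothAt hv
    have := continuousOn_of_smoothAt hκ
    have := continuousOn_of_smoothAt hκs
    have := continuousOn_of_smoothAt hκss
    exact ContinuousOn.intervalIntegrable (by fun_prop)
  rw [← intervalIntegral.integral_eq_sub_of_hasDerivAt (fun x hx => (hflux x hx).hasDerivAt_uderiv)
    hflux_int, ← intervalIntegral.integral_add hbulk_int hflux_int,
    ← intervalIntegral.integral_congr fun x hx => hF.tderiv_sderiv_curv_sq_mul_speed hab
      (uIcc_of_le hab.le ▸ hx) ht]
  exact hasDerivAt_intervalIntegral fun x hx =>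
    (((hκs x hx).pow 2).mul (hv x hx)).of_le (by simp)

end IsCSF

end Evolution

end CSF

/-- with κ = 0 at the endpoints,
d/dt ∫ₐᵇ (∂ₛκ)² v du = ∫ₐᵇ (7κ²(∂ₛκ)² - 2(∂ₛ²κ)²) v du for every t ∈ (0,T). -/
theorem L2_curvature_derivative_evolution (a b T : ℝ) (hab : a < b) (hT : 0 < T)
    (F : ℝ → ℝ → E2) (hF : CSF.IsCSF F a b T)
    (hbc : ∀ t ∈ Ico 0 T, CSF.curv F a t = 0 ∧ CSF.curv F b t = 0) :
    ∀ t ∈ Ioo 0 T,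
      HasDerivAt (fun x => ∫ u in a..b, (CSF.sderiv F (CSF.curv F) u x) ^ 2 * CSF.speed F u x)
        (∫ u in a..b,
          (7 * (CSF.curv F u t) ^ 2 * (CSF.sderiv F (CSF.curv F) u t) ^ 2
              - 2 * (CSF.sderiv F (CSF.sderiv F (CSF.curv F)) u t) ^ 2)
            * CSF.speed F u t) t := by
  intro t ht
  have ht' : t ∈ Ico 0 T := Ioo_subset_Ico_self ht
  have hκssa := hF.sderiv_sderiv_curv_eq_zero hab (left_mem_Icc.2 hab.le) ht' fun y hy =>
    (hbc y hy).1
  have hκssb := hF.sderiv_sderiv_curv_eq_zero hab (right_mem_Icc.2 hab.le) ht' fun y hy =>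
    (hbc y hy).2
  simpa only [hκssa, hκssb, mul_zero, sub_zero, add_zero] using
    hF.hasDerivAt_integral_sderiv_curv_sq hab ht'
end
end

section
/- Let γ : (-π/2, π/2) → ℝ² be the grim reaper curve γ(x) = (x, -log(cos x)). For 0 < a < π/2 let D(a) = ‖γ(a) - γ(-a)‖ be the chord (extrinsic) distance and L(a) = ∫_{-a}^{a} ‖γ′(x)‖ dx the arclength (intrinsic) distance between the points γ(-a) and γ(a). Then D(a)/L(a) → 0 as a → π/2⁻. In particular, no positive lower bound θ > 0 for the ratio D/L holds along the grim reaper. -/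
open Real MeasureTheory Set Filter

noncomputable section

/-!
The arclength from `γ (-a)` to `γ a` is at least the displacement `‖γ a - γ 0‖`. The two
branches of the grim reaper stay within distance `π` of each other at equal height, while `γ a`
escapes to infinity as `a → π / 2`; the chord is therefore negligible compared with the arclength,
and the integral of `sec` need not be evaluated.
-/

open Asymptotics Bornology
open scoped Topology

section Curve

variable {E : Type*} [NormedAddCommGroup E] [NormedSpace ℝ E] {γ : ℝ → E}

theorem norm_sub_le_integral_norm_deriv_of_subinterval {a b s t : ℝ}
    (has : a ≤ s) (hst : s ≤ t) (htb : t ≤ b)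
    (hcont : ContinuousOn γ (Icc s t)) (hdiff : DifferentiableOn ℝ γ (Ioo s t))
    (hint : IntervalIntegrable (fun x => ‖deriv γ x‖) volume a b) :
    ‖γ t - γ s‖ ≤ ∫ x in a..b, ‖deriv γ x‖ := by
  have hsub : uIcc s t ⊆ uIcc a b := by
    rw [uIcc_of_le hst, uIcc_of_le (has.trans (hst.trans htb))]
    exact Icc_subset_Icc has htb
  calc
    ‖γ t - γ s‖ ≤ ∫ x in s..t, ‖deriv γ x‖ :=
      norm_sub_le_integral_of_norm_deriv_le_of_le hst hcont hdiff
        (.of_forall fun _ _ => le_rfl) (hint.mono_set hsub)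
    _ ≤ ∫ x in a..b, ‖deriv γ x‖ :=
      intervalIntegral.integral_mono_interval has hst htb
        (.of_forall fun _ => norm_nonneg _) hint

theorem norm_sub_le_arclength {a c p : ℝ} (hγ : ContDiffOn ℝ 1 γ (Ioo (-c) c))
    (hac : a < c) (hp : p ∈ Icc (-a) a) : ‖γ a - γ p‖ ≤ ∫ x in (-a)..a, ‖deriv γ x‖ := by
  have hsub : Icc (-a) a ⊆ Ioo (-c) c := Icc_subset_Ioo (neg_lt_neg hac) hac
  have hsub' : Icc p a ⊆ Ioo (-c) c := (Icc_subset_Icc_left hp.1).trans hsub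
  have hspeed : ContinuousOn (fun x => ‖deriv γ x‖) (Ioo (-c) c) :=
    (hγ.continuousOn_deriv_of_isOpen isOpen_Ioo le_rfl).norm
  exact norm_sub_le_integral_norm_deriv_of_subinterval hp.1 hp.2 le_rfl
    (hγ.continuousOn.mono hsub')
    ((hγ.differentiableOn one_ne_zero).mono (Ioo_subset_Icc_self.trans hsub'))
    ((hspeed.mono hsub).intervalIntegrable_of_Icc (hp.1.trans hp.2))

theorem grim_reaper_ratio_tendsto_zero_general {c : ℝ} (hc : 0 < c)
    (hγ : ContDiffOn ℝ 1 γ (Ioo (-c) c))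
    (hchord : (fun a => γ a - γ (-a)) =O[𝓝[<] c] fun _ => (1 : ℝ))
    (hescape : Tendsto γ (𝓝[<] c) (cobounded E)) :
    Tendsto (fun a => ‖γ a - γ (-a)‖ / ∫ x in (-a)..a, ‖deriv γ x‖) (𝓝[<] c) (𝓝 0) ∧
    ¬ ∃ θ : ℝ, 0 < θ ∧ ∀ a ∈ Ioo 0 c,
      θ ≤ ‖γ a - γ (-a)‖ / ∫ x in (-a)..a, ‖deriv γ x‖ := by
  have hnear : ∀ᶠ a in 𝓝[<] c, a ∈ Ioo 0 c := Ioo_mem_nhdsLT hc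
  have hlength : (fun a => γ a - γ 0) =O[𝓝[<] c] fun a => ∫ x in (-a)..a, ‖deriv γ x‖ :=
    .of_bound' <| hnear.mono fun a ha =>
      (norm_sub_le_arclength hγ ha.2 ⟨neg_nonpos.2 ha.1.le, ha.1.le⟩).trans (le_abs_self _)
  have hdisplacement : (fun _ => (1 : ℝ)) =o[𝓝[<] c] fun a => γ a - γ 0 := by
    rw [isLittleO_one_left_iff, tendsto_norm_atTop_iff_cobounded]
    exact (tendsto_sub_const_cobounded (γ 0)).comp hescape
  have hratio : (fun a => γ a - γ (-a)) =o[𝓝[<] c] fun a => ∫ x in (-a)..a, ‖deriv γ x‖ :=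
    hchord.trans_isLittleO (hdisplacement.trans_isBigO hlength)
  have hlim := hratio.norm_left.tendsto_div_nhds_zero
  refine ⟨hlim, ?_⟩
  rintro ⟨θ, hθ, hbound⟩
  exact hθ.not_ge (ge_of_tendsto hlim (hnear.mono hbound))

end Curve

section Graph

variable {f : ℝ → ℝ}

/-- The graph of `f`, parametrized by abscissa as a curve in the Euclidean plane. -/
def graphCurve (f : ℝ → ℝ) (x : ℝ) : E2 := !₂[x, f x]

theorem contDiffOn_graphCurve {n : WithTop ℕ∞} {s : Set ℝ} (hf : ContDiffOn ℝ n f s) :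
    ContDiffOn ℝ n (graphCurve f) s := by
  rw [contDiffOn_euclidean, Fin.forall_fin_two]
  exact ⟨contDiffOn_id, hf⟩

theorem graphCurve_sub_graphCurve_neg (hf : f.Even) (a : ℝ) :
    graphCurve f a - graphCurve f (-a) = !₂[2 * a, 0] := by
  ext i
  fin_cases i
  · simp [graphCurve, two_mul]
  · simp [graphCurve, hf a]

theorem tendsto_graphCurve_cobounded {l : Filter ℝ} (hf : Tendsto f l (cobounded ℝ)) :
    Tendsto (graphCurve f) l (cobounded E2) := by
  rw [← tendsto_norm_atTop_iff_cobounded] at hf ⊢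
  exact tendsto_atTop_mono (fun x => PiLp.norm_apply_le (graphCurve f x) 1) hf

theorem graphCurve_sub_graphCurve_neg_isBigO_one (hf : f.Even) (c : ℝ) :
    (fun a => graphCurve f a - graphCurve f (-a)) =O[𝓝 c] fun _ => (1 : ℝ) := by
  have hcont : Continuous fun a : ℝ => (!₂[2 * a, 0] : E2) := by fun_prop
  simpa only [graphCurve_sub_graphCurve_neg hf] using (hcont.tendsto c).isBigO_one ℝ

end Graph

theorem even_neg_log_cos : Function.Even fun x : ℝ => -log (cos x) := fun x => by
  simp only [cos_neg]

theorem contDiffOn_neg_log_cos {n : WithTop ℕ∞} :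
    ContDiffOn ℝ n (fun x => -log (cos x)) (Ioo (-(π / 2)) (π / 2)) :=
  (contDiff_cos.contDiffOn.log fun _ hx => (cos_pos_of_mem_Ioo hx).ne').neg

theorem tendsto_neg_log_cos_pi_div_two :
    Tendsto (fun x => -log (cos x)) (𝓝[<] (π / 2)) atTop :=
  tendsto_neg_atBot_atTop.comp (tendsto_log_nhdsGT_zero.comp tendsto_cos_pi_div_two)

/-- along the grim reaper curve γ(x) = (x, -log cos x), the ratio D/L of the
chord distance D(a) = ‖γ(a) - γ(-a)‖ to the arclength L(a) = ∫₋ₐᵃ ‖γ′‖ tends to 0 as a → π/2⁻;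
in particular no positive lower bound θ > 0 for D/L holds along the grim reaper. -/
theorem grim_reaper_ratio_tendsto_zero (γ : ℝ → E2)
    (hγ : ∀ x, γ x = ![x, -Real.log (Real.cos x)])
    (D L : ℝ → ℝ)
    (hD : ∀ a, D a = ‖γ a - γ (-a)‖)
    (hL : ∀ a, L a = ∫ x in (-a)..a, ‖deriv γ x‖) :
    Tendsto (fun a => D a / L a) (nhdsWithin (π / 2) (Iio (π / 2))) (nhds 0) ∧
    ¬ ∃ θ : ℝ, 0 < θ ∧ ∀ a ∈ Ioo 0 (π / 2), θ ≤ D a / L a := by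
  obtain rfl : γ = graphCurve fun x => -log (cos x) := by
    funext x
    exact (EuclideanSpace.equiv (Fin 2) ℝ).injective (hγ x)
  simpa only [hD, hL] using grim_reaper_ratio_tendsto_zero_general pi_div_two_pos
    (contDiffOn_graphCurve contDiffOn_neg_log_cos)
    ((graphCurve_sub_graphCurve_neg_isBigO_one even_neg_log_cos _).mono nhdsWithin_le_nhds)
    (tendsto_graphCurve_cobounded
      (tendsto_neg_log_cos_pi_div_two.mono_right IsOrderBornology.atTop_le_cobounded))
end
end

section
/- Let F : [a,b] → ℝ² be a C¹ regular curve (F′(u) ≠ 0 for all u). For p ≤ q define the extrinsic distance D(p,q) = ‖F(q) - F(p)‖ and the intrinsic distance L(p,q) = ∫_p^q ‖F′(u)‖ du. Suppose the ratio D/L attains a local minimum at an interior point (p,q) with a < p < q < b and F(p) ≠ F(q). Then, with T = F′/‖F′‖ the unit tangent and W = (F(q) - F(p))/D(p,q) the unit chord direction, one has ⟨T(p), W⟩ = ⟨T(q), W⟩ = D(p,q)/L(p,q). -/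
/-!
At a local extremum the chord-to-arc ratio is stationary in each endpoint separately. Moving the
endpoint `q`, the chord length `D` has logarithmic derivative `⟨F'(q), W⟩ / D` and the arc length
`L` has logarithmic derivative `‖F'(q)‖ / L`; equating them gives `⟨T(q), W⟩ = D / L`. With a signed
arc length, exchanging the endpoints reverses the signs of both `W` and `L`, so the condition at
`p` is the one at `q` read backwards.
-/

open Real MeasureTheory Set Filter

noncomputable section

section Stationarity

variable {E : Type*} [NormedAddCommGroup E] [InnerProductSpace ℝ E]

theorem hasDerivAt_norm_comp {G : ℝ → E} {G' : E} {x : ℝ} (hG : HasDerivAt G G' x)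
    (h₀ : G x ≠ 0) :
    HasDerivAt (fun t => ‖G t‖) (inner ℝ G' (NormedSpace.normalize (G x))) x := by
  have hsqrt := hG.norm_sq.sqrt (pow_ne_zero 2 (norm_ne_zero_iff.mpr h₀))
  simp only [Real.sqrt_sq (norm_nonneg _)] at hsqrt
  convert hsqrt using 1
  rw [NormedSpace.normalize, real_inner_smul_right, real_inner_comm]
  field_simp

theorem deriv_eq_div_mul_of_isLocalExtr_div {f g : ℝ → ℝ} {f' g' x : ℝ} (hf : HasDerivAt f f' x)
    (hg : HasDerivAt g g' x) (hgx : g x ≠ 0) (hext : IsLocalExtr (fun t => f t / g t) x) :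
    f' = f x / g x * g' := by
  have hzero : (f' * g x - f x * g') / g x ^ 2 = 0 :=
    hext.hasDerivAt_eq_zero (hf.div hg hgx)
  field_simp at hzero ⊢
  linarith

theorem inner_normalize_eq_div_of_isLocalExtr {G : ℝ → E} {G' : E} {l : ℝ → ℝ} {x : ℝ}
    (hG : HasDerivAt G G' x) (hl : HasDerivAt l ‖G'‖ x) (hG₀ : G x ≠ 0) (hG' : G' ≠ 0)
    (hl₀ : l x ≠ 0) (hext : IsLocalExtr (fun t => ‖G t‖ / l t) x) :
    inner ℝ (NormedSpace.normalize G') (NormedSpace.normalize (G x)) = ‖G x‖ / l x := by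
  have hstat : inner ℝ G' (NormedSpace.normalize (G x)) = ‖G x‖ / l x * ‖G'‖ :=
    deriv_eq_div_mul_of_isLocalExtr_div (hasDerivAt_norm_comp hG hG₀) hl hl₀ hext
  rw [NormedSpace.normalize, real_inner_smul_left, hstat, mul_comm,
    mul_inv_cancel_right₀ (norm_ne_zero_iff.mpr hG')]

end Stationarity

section ArcLength

variable {E : Type*} [NormedAddCommGroup E]

/-- The arc length from `p` to `q` of a curve with velocity `V`. It is signed: negative when
`q < p`. -/
def arcLength (V : ℝ → E) (p q : ℝ) : ℝ := ∫ u in p..q, ‖V u‖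

variable {V : ℝ → E} {s : Set ℝ} {p q : ℝ}

theorem arcLength_symm (V : ℝ → E) (p q : ℝ) : arcLength V q p = -arcLength V p q :=
  intervalIntegral.integral_symm p q

theorem arcLength_pos (hV : ContinuousOn V (Icc p q)) (hpq : p < q)
    (hne : ∃ c ∈ Icc p q, V c ≠ 0) : 0 < arcLength V p q :=
  intervalIntegral.integral_pos hpq hV.norm (fun _ _ => norm_nonneg _)
    (by simpa only [norm_pos_iff] using hne)

theorem arcLength_ne_zero (hV : ContinuousOn V (uIcc p q)) (hpq : p ≠ q)
    (hne : ∃ c ∈ uIcc p q, V c ≠ 0) : arcLength V p q ≠ 0 := by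
  rcases hpq.lt_or_gt with h | h
  · rw [uIcc_of_lt h] at hV hne
    exact (arcLength_pos hV h hne).ne'
  · rw [uIcc_of_gt h] at hV hne
    rw [arcLength_symm, neg_ne_zero]
    exact (arcLength_pos hV h hne).ne'

theorem hasDerivAt_arcLength_right (hs : IsOpen s) (hV : ContinuousOn V s)
    (hpq : uIcc p q ⊆ s) : HasDerivAt (arcLength V p) ‖V q‖ q :=
  have hq : q ∈ s := hpq right_mem_uIcc
  intervalIntegral.integral_hasDerivAt_right (hV.norm.mono hpq).intervalIntegrable
    (hV.norm.stronglyMeasurableAtFilter hs q hq) (hV.norm.continuousAt (hs.mem_nhds hq))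

end ArcLength

section ChordArc

variable {E : Type*} [NormedAddCommGroup E] [InnerProductSpace ℝ E] {F F' : ℝ → E} {s : Set ℝ}
  {p q : ℝ}

theorem tangent_chord_at_endpoint (hs : IsOpen s) (hpqs : uIcc p q ⊆ s)
    (hderiv : HasDerivAt F (F' q) q) (hcont : ContinuousOn F' s) (hreg : F' q ≠ 0)
    (hne : F p ≠ F q) (hext : IsLocalExtr (fun t => ‖F t - F p‖ / arcLength F' p t) q) :
    inner ℝ (NormedSpace.normalize (F' q)) (NormedSpace.normalize (F q - F p)) =
      ‖F q - F p‖ / arcLength F' p q :=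
  inner_normalize_eq_div_of_isLocalExtr (hderiv.sub_const (F p))
    (hasDerivAt_arcLength_right hs hcont hpqs) (sub_ne_zero.mpr hne.symm) hreg
    (arcLength_ne_zero (hcont.mono hpqs) (ne_of_apply_ne F hne) ⟨q, right_mem_uIcc, hreg⟩) hext

theorem tangent_chord_at_min_general (hs : IsOpen s) (hpqs : uIcc p q ⊆ s)
    (hderiv : ∀ u ∈ s, HasDerivAt F (F' u) u) (hcont : ContinuousOn F' s)
    (hp : F' p ≠ 0) (hq : F' q ≠ 0) (hne : F p ≠ F q)
    (hext : IsLocalExtr (fun z : ℝ × ℝ => ‖F z.2 - F z.1‖ / arcLength F' z.1 z.2) (p, q)) :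
    inner ℝ (NormedSpace.normalize (F' p)) (NormedSpace.normalize (F q - F p)) =
        ‖F q - F p‖ / arcLength F' p q ∧
      inner ℝ (NormedSpace.normalize (F' q)) (NormedSpace.normalize (F q - F p)) =
        ‖F q - F p‖ / arcLength F' p q := by
  constructor
  · have hext_p : IsLocalExtr (fun t => ‖F t - F q‖ / arcLength F' q t) p := by
      have hslice : IsLocalExtr (fun t => ‖F q - F t‖ / arcLength F' t q) p :=
        hext.comp_continuous (g := fun t => (t, q)) (by fun_prop)
      simpa only [norm_sub_rev (F q), arcLength_symm F' q, div_neg, neg_neg] using hslice.neg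
    have hreversed := tangent_chord_at_endpoint hs (uIcc_comm p q ▸ hpqs)
      (hderiv p (hpqs left_mem_uIcc)) hcont hp hne.symm hext_p
    rwa [← neg_sub (F q), NormedSpace.normalize_neg, inner_neg_right, norm_neg, arcLength_symm,
      div_neg, neg_inj] at hreversed
  · have hext_q : IsLocalExtr (fun t => ‖F t - F p‖ / arcLength F' p t) q :=
      hext.comp_continuous (g := fun t => (p, t)) (by fun_prop)
    exact tangent_chord_at_endpoint hs hpqs (hderiv q (hpqs right_mem_uIcc)) hcont hq hne hext_q

end ChordArc

/-- if the ratio D/L of extrinsic to intrinsic distance along a C¹ regular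
curve attains a local minimum at an interior point (p,q) with F(p) ≠ F(q), then
⟨T(p), W⟩ = ⟨T(q), W⟩ = D(p,q)/L(p,q), where T is the unit tangent and W the unit chord
direction. -/
theorem tangent_chord_at_min (a b : ℝ) (hab : a < b) (F F' : ℝ → E2)
    (hderiv : ∀ u ∈ Icc a b, HasDerivAt F (F' u) u)
    (hcont : ContinuousOn F' (Icc a b))
    (hreg : ∀ u ∈ Icc a b, F' u ≠ 0)
    (D L : ℝ → ℝ → ℝ)
    (hD : ∀ p q, D p q = ‖F q - F p‖)
    (hL : ∀ p q, L p q = ∫ u in p..q, ‖F' u‖)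
    (p q : ℝ) (hap : a < p) (hpq : p < q) (hqb : q < b) (hne : F p ≠ F q)
    (hmin : IsLocalMin (fun z : ℝ × ℝ => D z.1 z.2 / L z.1 z.2) (p, q)) :
    inner (𝕜 := ℝ) (‖F' p‖⁻¹ • F' p) ((D p q)⁻¹ • (F q - F p)) = D p q / L p q ∧
    inner (𝕜 := ℝ) (‖F' q‖⁻¹ • F' q) ((D p q)⁻¹ • (F q - F p)) = D p q / L p q := by
  obtain rfl : D = fun p q => ‖F q - F p‖ := funext₂ hD
  obtain rfl : L = arcLength F' := funext₂ hL
  have hsub : uIcc p q ⊆ Ioo a b := by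
    rw [uIcc_of_lt hpq]
    exact Icc_subset_Ioo hap hqb
  exact tangent_chord_at_min_general isOpen_Ioo hsub
    (fun u hu => hderiv u (Ioo_subset_Icc_self hu)) (hcont.mono Ioo_subset_Icc_self)
    (hreg p (Ioo_subset_Icc_self (hsub left_mem_uIcc)))
    (hreg q (Ioo_subset_Icc_self (hsub right_mem_uIcc))) hne hmin.isExtr
end
end

section
/- (Sequence lemma for type 2 singularities) Let ε > 0, let t* < ∞, let (t_n)_{n≥0} be a strictly increasing sequence in [0,t*) converging to t*, and let (K_n)_{n≥0} be positive reals satisfying K_{n+1} = (1+ε) K_n for all n. If limsup_{m→∞} K_m² (t_{m+1} - t_m) < ∞, then sup_n (t* - t_n) K_n² < ∞. Equivalently, if (t* - t_n) K_n² is unbounded then limsup_{m→∞} K_m² (t_{m+1} - t_m) = +∞. -/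
open Real Set Filter

/-!
Measured by the initial weight `w 0`, the increment `t (k + 1) - t k` costs at most `C * r⁻¹ ^ k`,
because the weights grow at least like `r ^ k`. Telescoping and summing the geometric series
bounds `w 0 * (tstar - t 0)` by a constant depending only on `C` and `r`; this applies equally to
all the shifted sequences, whence the uniform bound.
-/

section GeometricWeights

variable {r C : ℝ} {w : ℕ → ℝ}

lemma initial_weight_mul_le_mul_inv_pow (hr : 0 < r) (hw₀ : 0 ≤ w 0)
    (hw : ∀ k, r * w k ≤ w (k + 1)) (hC : 0 ≤ C) {d : ℕ → ℝ} (hd : ∀ k, w k * d k ≤ C) (k : ℕ) :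
    w 0 * d k ≤ C * r⁻¹ ^ k := by
  rcases le_total (d k) 0 with hneg | hpos
  · exact (mul_nonpos_of_nonneg_of_nonpos hw₀ hneg).trans (by positivity)
  · have hgrowth : r ^ k * w 0 ≤ w k := geom_le hr.le k fun j _ ↦ hw j
    rw [inv_pow, le_mul_inv_iff₀ (pow_pos hr k)]
    calc w 0 * d k * r ^ k = r ^ k * w 0 * d k := by ring
      _ ≤ w k * d k := by gcongr
      _ ≤ C := hd k

variable {t : ℕ → ℝ}

lemma initial_weight_mul_sub_le (hr : 1 < r) (hw₀ : 0 ≤ w 0) (hw : ∀ k, r * w k ≤ w (k + 1))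
    (hC : 0 ≤ C) (ht : ∀ k, w k * (t (k + 1) - t k) ≤ C) (n : ℕ) :
    w 0 * (t n - t 0) ≤ C * (1 - r⁻¹)⁻¹ := by
  have hr₀ : 0 < r := one_pos.trans hr
  calc w 0 * (t n - t 0) = ∑ k ∈ Finset.range n, w 0 * (t (k + 1) - t k) := by
        rw [← Finset.mul_sum, Finset.sum_range_sub]
    _ ≤ ∑ k ∈ Finset.range n, C * r⁻¹ ^ k :=
        Finset.sum_le_sum fun k _ ↦ initial_weight_mul_le_mul_inv_pow hr₀ hw₀ hw hC ht k
    _ = C * ∑ k ∈ Finset.range n, r⁻¹ ^ k := (Finset.mul_sum ..).symm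
    _ ≤ C * (1 - r⁻¹)⁻¹ := by
        gcongr
        exact sum_le_hasSum _ (fun k _ ↦ by positivity)
          (hasSum_geometric_of_lt_one (by positivity) (inv_lt_one_of_one_lt₀ hr))

lemma initial_weight_mul_limit_sub_le (hr : 1 < r) (hw₀ : 0 ≤ w 0)
    (hw : ∀ k, r * w k ≤ w (k + 1)) (hC : 0 ≤ C) (ht : ∀ k, w k * (t (k + 1) - t k) ≤ C)
    {tstar : ℝ} (hlim : Tendsto t atTop (nhds tstar)) :
    w 0 * (tstar - t 0) ≤ C * (1 - r⁻¹)⁻¹ :=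
  le_of_tendsto' ((hlim.sub_const (t 0)).const_mul (w 0))
    (initial_weight_mul_sub_le hr hw₀ hw hC ht)

lemma eventually_weight_mul_limit_sub_le (hr : 1 < r) (hw₀ : ∀ᶠ n in atTop, 0 ≤ w n)
    (hw : ∀ᶠ n in atTop, r * w n ≤ w (n + 1)) (hC : 0 ≤ C)
    (ht : ∀ᶠ n in atTop, w n * (t (n + 1) - t n) ≤ C)
    {tstar : ℝ} (hlim : Tendsto t atTop (nhds tstar)) :
    ∀ᶠ n in atTop, w n * (tstar - t n) ≤ C * (1 - r⁻¹)⁻¹ := by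
  filter_upwards [hw₀, eventually_forall_ge_atTop.2 hw, eventually_forall_ge_atTop.2 ht]
    with n hw₀n hwn htn
  exact initial_weight_mul_limit_sub_le (w := fun k ↦ w (n + k)) (t := fun k ↦ t (n + k)) hr hw₀n
    (fun k ↦ hwn (n + k) (n.le_add_right k)) hC (fun k ↦ htn (n + k) (n.le_add_right k))
    (hlim.comp (tendsto_add_atTop_nat n |>.congr fun k ↦ add_comm k n))

end GeometricWeights

theorem type2_sequence_lemma_general {r : ℝ} (hr : 1 < r) {tstar : ℝ} {t K : ℕ → ℝ}
    (hlim : Tendsto t atTop (nhds tstar))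
    (hK : ∀ᶠ n in atTop, r * |K n| ≤ |K (n + 1)|)
    (hlimsup : ∃ C : ℝ, ∀ᶠ m in atTop, (K m) ^ 2 * (t (m + 1) - t m) ≤ C) :
    ∃ C : ℝ, ∀ n, (tstar - t n) * (K n) ^ 2 ≤ C := by
  obtain ⟨C, hC⟩ := hlimsup
  have hsq : ∀ᶠ n in atTop, r ^ 2 * K n ^ 2 ≤ K (n + 1) ^ 2 := hK.mono fun n hn ↦ by
    rw [← sq_abs (K n), ← sq_abs (K (n + 1)), ← mul_pow]
    gcongr
  have hbound : ∀ᶠ n in atTop, K n ^ 2 * (tstar - t n) ≤ max C 0 * (1 - (r ^ 2)⁻¹)⁻¹ :=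
    eventually_weight_mul_limit_sub_le (one_lt_pow₀ hr two_ne_zero)
      (.of_forall fun n ↦ sq_nonneg (K n)) hsq (le_max_right C 0)
      (hC.mono fun m hm ↦ hm.trans (le_max_left C 0)) hlim
  obtain ⟨B, hB⟩ := (isBoundedUnder_of_eventually_le hbound).bddAbove_range
  exact ⟨B, fun n ↦ mul_comm (K n ^ 2) _ ▸ hB (mem_range_self n)⟩

/-- Sequence lemma for type 2 singularities: if tₙ ↑ t* < ∞ and Kₙ > 0 with
K_{n+1} = (1+ε)Kₙ, and limsup Kₘ²(t_{m+1} - tₘ) < ∞ (i.e. Kₘ²(t_{m+1} - tₘ) is eventually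
bounded above), then (t* - tₙ)Kₙ² is bounded. -/
theorem type2_sequence_lemma (ε : ℝ) (hε : 0 < ε) (tstar : ℝ)
    (t : ℕ → ℝ) (K : ℕ → ℝ)
    (hmono : StrictMono t) (hmem : ∀ n, t n ∈ Ico (0 : ℝ) tstar)
    (hlim : Tendsto t atTop (nhds tstar))
    (hKpos : ∀ n, 0 < K n) (hKrec : ∀ n, K (n + 1) = (1 + ε) * K n)
    (hlimsup : ∃ C : ℝ, ∀ᶠ m in atTop, (K m) ^ 2 * (t (m + 1) - t m) ≤ C) :
    ∃ C : ℝ, ∀ n, (tstar - t n) * (K n) ^ 2 ≤ C :=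
  type2_sequence_lemma_general (lt_add_of_pos_right 1 hε) hlim
    (.of_forall fun n ↦ by rw [hKrec, abs_mul, abs_of_pos (by positivity : 0 < 1 + ε)]) hlimsup
end
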